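/- For every convex polygon D with n sides, every finite point set S in general position with respect to D, and the generalized Delaunay triangulation DT_D(S): if D' is a homothet of D, then the set of points D' ∩ S induces a connected subgraph of DT_D(S). -/

import Mathlib

open scoped Classical

/-- `D'` is a homothetic copy (positive scaling plus translation) of `D`. -/
def IsHomothet (D D' : Set (ℝ × ℝ)) : Prop :=
  ∃ lam : ℝ, 0 < lam ∧ ∃ v : ℝ × ℝ, D' = (fun p => lam • p + v) '' D

/-- The generalized Delaunay graph of the point set `S` with respect to `D`: two points of
`S` are adjacent iff some homothet of `D` contains exactly those two points of `S`. -/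
def DelaunayGraph (D : Set (ℝ × ℝ)) (S : Finset (ℝ × ℝ)) : SimpleGraph (ℝ × ℝ) :=
  SimpleGraph.fromRel (fun p q => p ∈ S ∧ q ∈ S ∧
    ∃ D'' : Set (ℝ × ℝ), IsHomothet D D'' ∧ ∀ s ∈ S, (s ∈ D'' ↔ s = p ∨ s = q))

/-- `S` is in general position with respect to the convex polygon `D` with vertex set `W`:
no two points of `S` lie on a line parallel to a side of `D`, and no four points of `S` lie
on the boundary of a homothet of `D`. -/
def GeneralPosition (D : Set (ℝ × ℝ)) (W : Finset (ℝ × ℝ)) (S : Finset (ℝ × ℝ)) : Prop :=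
  (∀ a ∈ W, ∀ b ∈ W, a ≠ b → segment ℝ a b ⊆ frontier D →
    ∀ p ∈ S, ∀ q ∈ S, p ≠ q → ¬ ∃ t : ℝ, q - p = t • (b - a)) ∧
  (∀ D' : Set (ℝ × ℝ), IsHomothet D D' →
    (S.filter (fun p => p ∈ frontier D')).card ≤ 3)

open Filter Topology

lemma hom_preimage {D E : Set (ℝ × ℝ)} (h : IsHomothet D E) {μ : ℝ} (hμ : 0 < μ) (w : ℝ × ℝ) :
    IsHomothet D {x | μ • x + w ∈ E} := by
  obtain ⟨lam, hl, v, rfl⟩ := h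
  refine ⟨μ⁻¹ * lam, by positivity, μ⁻¹ • (v - w), ?_⟩
  ext x
  simp only [Set.mem_ofPred_eq, Set.mem_image]
  constructor
  · rintro ⟨d, hd, h⟩
    refine ⟨d, hd, ?_⟩
    have : x = μ⁻¹ • (lam • d + v - w) := by
      rw [h, add_sub_cancel_right, smul_smul, inv_mul_cancel₀ hμ.ne', one_smul]
    rw [this]; module
  · rintro ⟨d, hd, rfl⟩
    refine ⟨d, hd, ?_⟩
    rw [smul_add, smul_smul, smul_smul, ← mul_assoc, mul_inv_cancel₀ hμ.ne', one_mul, one_smul]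
    abel

lemma hom_eq_preimage {D E : Set (ℝ × ℝ)} (h : IsHomothet D E) :
    ∃ μ : ℝ, 0 < μ ∧ ∃ w : ℝ × ℝ, E = {x | μ • x + w ∈ D} := by
  obtain ⟨lam, hl, v, rfl⟩ := h
  refine ⟨lam⁻¹, by positivity, -(lam⁻¹ • v), ?_⟩
  ext x
  simp only [Set.mem_ofPred_eq, Set.mem_image]
  constructor
  · rintro ⟨d, hd, rfl⟩
    rw [smul_add, smul_smul, inv_mul_cancel₀ hl.ne', one_smul, add_neg_cancel_right]
    exact hd
  · intro h
    refine ⟨_, h, ?_⟩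
    rw [smul_add, smul_neg, smul_smul, smul_smul, mul_inv_cancel₀ hl.ne', one_smul, one_smul]
    abel

lemma hom_compact_convex {D E : Set (ℝ × ℝ)} (hc : IsCompact D) (hv : Convex ℝ D)
    (h : IsHomothet D E) : IsCompact E ∧ Convex ℝ E := by
  obtain ⟨lam, hl, v, rfl⟩ := h
  refine ⟨hc.image (by fun_prop), ?_⟩
  have : (fun p : ℝ × ℝ => lam • p + v) '' D = (fun z => z + v) '' ((fun z => lam • z) '' D) := by
    rw [Set.image_image]
  rw [this]
  have h2 := (hv.smul lam).translate v
  simpa [add_comm, Set.image_smul] using h2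

/-- Supporting functional at a non-interior point. -/
lemma exists_support {D : Set (ℝ × ℝ)} (hv : Convex ℝ D) {m : ℝ × ℝ} (hm : m ∈ D)
    (hmi : m ∉ interior D) : ∃ f : (ℝ × ℝ) →ₗ[ℝ] ℝ, f ≠ 0 ∧ ∀ x ∈ D, f x ≤ f m := by
  by_cases hne : (interior D).Nonempty
  · obtain ⟨f, hf⟩ := geometric_hahn_banach_open_point hv.interior isOpen_interior hmi
    refine ⟨f, ?_, ?_⟩
    · intro h0
      obtain ⟨y, hy⟩ := hne
      have := hf y hy
      have e : ∀ z, f z = 0 := fun z => by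
        have := LinearMap.congr_fun h0 z
        simpa using this
      rw [e, e] at this
      exact lt_irrefl _ this
    · intro x hx
      have hx' : x ∈ closure (interior D) := by
        rw [hv.closure_interior_eq_closure_of_nonempty_interior hne]
        exact subset_closure hx
      have hcl : IsClosed {z | f z ≤ f m} := isClosed_le f.continuous continuous_const
      exact closure_minimal (fun z hz => (hf z hz).le) hcl hx'
  · have hspan : affineSpan ℝ D ≠ ⊤ := fun h => hne (hv.interior_nonempty_iff_affineSpan_eq_top.2 h)
    have hdir : vectorSpan ℝ D < ⊤ := by
      rw [lt_top_iff_ne_top]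
      intro h
      apply hspan
      rw [AffineSubspace.affineSpan_eq_top_iff_vectorSpan_eq_top_of_nonempty]
      · exact h
      · exact ⟨m, hm⟩
    obtain ⟨f, hf, hle⟩ := Submodule.exists_le_ker_of_lt_top _ hdir
    refine ⟨f, hf, fun x hx => ?_⟩
    have : f (x - m) = 0 := hle (vsub_mem_vectorSpan ℝ hx hm)
    rw [map_sub] at this
    linarith

lemma parallel_of_ker {f : (ℝ × ℝ) →ₗ[ℝ] ℝ} (hf : f ≠ 0) {u v : ℝ × ℝ} (hu : f u = 0)
    (hv : f v = 0) (hv0 : v ≠ 0) : ∃ t : ℝ, u = t • v := by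
  have e : ∀ z : ℝ × ℝ, f z = z.1 * f (1, 0) + z.2 * f (0, 1) := by
    intro z
    have : z = z.1 • ((1, 0) : ℝ × ℝ) + z.2 • ((0, 1) : ℝ × ℝ) := by ext <;> simp
    conv_lhs => rw [this]
    rw [map_add, map_smul, map_smul, smul_eq_mul, smul_eq_mul]
  set α := f (1, 0)
  set β := f (0, 1)
  rw [e] at hu hv
  have hab : α ≠ 0 ∨ β ≠ 0 := by
    by_contra! h
    apply hf
    ext <;> simp [e, h.1, h.2]
  have hc : u.1 * v.2 - u.2 * v.1 = 0 := by
    rcases hab with h | h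
    · apply mul_left_cancel₀ h; linear_combination v.2 * hu - u.2 * hv
    · apply mul_left_cancel₀ h; linear_combination u.1 * hv - v.1 * hu
  have hN : v.1 ^ 2 + v.2 ^ 2 ≠ 0 := by
    intro h
    apply hv0
    have h1 : v.1 = 0 := by nlinarith [sq_nonneg v.1, sq_nonneg v.2]
    have h2 : v.2 = 0 := by nlinarith [sq_nonneg v.1, sq_nonneg v.2]
    ext <;> simp [h1, h2]
  refine ⟨(u.1 * v.1 + u.2 * v.2) / (v.1 ^ 2 + v.2 ^ 2), ?_⟩
  ext
  · simp only [Prod.smul_fst, smul_eq_mul]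
    field_simp
    linear_combination v.2 * hc
  · simp only [Prod.smul_snd, smul_eq_mul]
    field_simp
    linear_combination (-v.1) * hc

/-- If all vertices maximising `f` coincide with `a`, so do all points of the hull. -/
lemma face_point {W : Finset (ℝ × ℝ)} {f : (ℝ × ℝ) →ₗ[ℝ] ℝ} {M : ℝ} (hM : ∀ y ∈ W, f y ≤ M)
    {a x : ℝ × ℝ} (ha : ∀ y ∈ W, f y = M → y = a) (hx : x ∈ convexHull ℝ (W : Set (ℝ × ℝ)))
    (hfx : f x = M) : x = a := by
  rw [Finset.mem_convexHull'] at hx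
  obtain ⟨w, hw0, hw1, rfl⟩ := hx
  have hz : ∑ y ∈ W, w y * (M - f y) = 0 := by
    simp only [map_sum, map_smul, smul_eq_mul] at hfx
    simp only [mul_sub, Finset.sum_sub_distrib, ← Finset.sum_mul, hw1, hfx]
    ring
  rw [Finset.sum_eq_zero_iff_of_nonneg
    (fun y hy => mul_nonneg (hw0 y hy) (sub_nonneg.2 (hM y hy)))] at hz
  have : ∀ y ∈ W, w y • y = w y • a := by
    intro y hy
    rcases mul_eq_zero.1 (hz y hy) with h | h
    · simp [h]
    · rw [ha y hy (by linarith)]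
  rw [Finset.sum_congr rfl this, ← Finset.sum_smul, hw1, one_smul]

lemma midpoint_interior {W : Finset (ℝ × ℝ)} {D : Set (ℝ × ℝ)}
    (hD : D = convexHull ℝ (W : Set (ℝ × ℝ))) {q r : ℝ × ℝ} (hq : q ∈ D) (hr : r ∈ D)
    (hqr : q ≠ r) (hm : midpoint ℝ q r ∉ interior D) :
    ∃ a ∈ W, ∃ b ∈ W, a ≠ b ∧ segment ℝ a b ⊆ frontier D ∧ ∃ t : ℝ, r - q = t • (b - a) := by
  have hv : Convex ℝ D := hD ▸ convex_convexHull ℝ _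
  have hcl : IsClosed D := by
    rw [hD]; exact (W.finite_toSet.isCompact_convexHull ℝ).isClosed
  have hmD : midpoint ℝ q r ∈ D := hv.midpoint_mem hq hr
  obtain ⟨f, hf0, hf⟩ := exists_support hv hmD hm
  set M := f (midpoint ℝ q r) with hMdef
  have hMe : M = (f q + f r) / 2 := by
    rw [hMdef, midpoint_eq_smul_add, map_smul, map_add]; simp; ring
  have hfq : f q = M := by have := hf q hq; have := hf r hr; linarith
  have hfr : f r = M := by have := hf q hq; have := hf r hr; linarith
  have hWD : ∀ y ∈ W, y ∈ D := fun y hy => hD ▸ subset_convexHull ℝ _ hy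
  have hM : ∀ y ∈ W, f y ≤ M := fun y hy => hf y (hWD y hy)
  have hex : ∃ a ∈ W, ∃ b ∈ W, a ≠ b ∧ f a = M ∧ f b = M := by
    by_contra! hcon
    by_cases h1 : ∃ a ∈ W, f a = M
    · obtain ⟨a, ha, hfa⟩ := h1
      have hu : ∀ y ∈ W, f y = M → y = a := fun y hy hfy => by
        by_contra hne
        exact hcon a ha y hy (Ne.symm hne) hfa hfy
      exact hqr ((face_point hM hu (hD ▸ hq) hfq).trans (face_point hM hu (hD ▸ hr) hfr).symm)
    · push Not at h1
      exact hqr ((face_point hM (a := r) (fun y hy h => absurd h (h1 y hy)) (hD ▸ hq) hfq))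
  obtain ⟨a, ha, b, hb, hab, hfa, hfb⟩ := hex
  refine ⟨a, ha, b, hb, hab, ?_, ?_⟩
  · intro x hx
    have hxD : x ∈ D := hv.segment_subset (hWD a ha) (hWD b hb) hx
    rw [hcl.frontier_eq]
    refine ⟨hxD, fun hxi => ?_⟩
    have hfx : f x = M := by
      obtain ⟨s, t, hs, ht, hst, rfl⟩ := hx
      rw [map_add, map_smul, map_smul, hfa, hfb, smul_eq_mul, smul_eq_mul, ← add_mul, hst, one_mul]
    obtain ⟨z, hz⟩ : ∃ z, f z ≠ 0 := by
      by_contra! h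
      exact hf0 (LinearMap.ext h)
    have hcont : Tendsto (fun ε : ℝ => x + ε • (f z • z)) (𝓝[>] 0) (𝓝 x) := by
      have : Continuous (fun ε : ℝ => x + ε • (f z • z)) := by fun_prop
      have h := this.tendsto 0
      simp only [zero_smul, add_zero] at h
      exact h.mono_left nhdsWithin_le_nhds
    have hev := hcont.eventually (mem_interior_iff_mem_nhds.1 hxi)
    obtain ⟨ε, hε, hε0⟩ := (hev.and self_mem_nhdsWithin).exists
    have h1 := hf _ hε
    rw [map_add, map_smul, map_smul, hfx, smul_eq_mul, smul_eq_mul] at h1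
    have h2 : 0 < ε * (f z * f z) := mul_pos hε0 (mul_self_pos.2 hz)
    linarith
  · apply parallel_of_ker hf0
    · rw [map_sub, hfq, hfr, sub_self]
    · rw [map_sub, hfa, hfb, sub_self]
    · exact sub_ne_zero.2 hab.symm

lemma removal {D : Set (ℝ × ℝ)} {S : Finset (ℝ × ℝ)} (hc : IsCompact D) (hv : Convex ℝ D)
    (hmid : ∀ E, IsHomothet D E → ∀ q ∈ S, ∀ r ∈ S, q ∈ E → r ∈ E → q ≠ r →
      midpoint ℝ q r ∈ interior E)
    {E₀ : Set (ℝ × ℝ)} (hE₀ : IsHomothet D E₀) {p q₀ : ℝ × ℝ} (hpS : p ∈ S) (hp : p ∈ E₀)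
    (hq₀S : q₀ ∈ S) (hq₀ : q₀ ∈ E₀) (hpq : q₀ ≠ p) :
    ∃ r ∈ S, r ∈ E₀ ∧ r ≠ p ∧ ∃ E', IsHomothet D E' ∧ ∀ x ∈ S, x ∈ E' ↔ x ∈ E₀ ∧ x ≠ r := by
  obtain ⟨hE₀c, hE₀v⟩ := hom_compact_convex hc hv hE₀
  -- shrink about `p`
  let T : Set ℝ := {s | 1 ≤ s ∧ ∀ q ∈ S, q ∈ E₀ → p + s • (q - p) ∈ E₀}
  have hT1 : (1 : ℝ) ∈ T := ⟨le_rfl, fun q _ hq => by simpa using hq⟩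
  have hTcl : IsClosed T := by
    have : T = {s | 1 ≤ s} ∩ ⋂ q ∈ S, ⋂ (_ : q ∈ E₀), {s : ℝ | p + s • (q - p) ∈ E₀} := by
      ext s; simp [T]
    rw [this]
    refine (isClosed_le continuous_const continuous_id).inter ?_
    refine isClosed_biInter fun q _ => isClosed_iInter fun _ => ?_
    exact hE₀c.isClosed.preimage (by fun_prop)
  have hTb : Bornology.IsBounded T := by
    obtain ⟨R, hR⟩ := hE₀c.isBounded.exists_norm_le
    have hn : 0 < ‖q₀ - p‖ := norm_pos_iff.2 (sub_ne_zero.2 hpq)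
    refine (Metric.isBounded_Icc (1 : ℝ) ((R + ‖p‖) / ‖q₀ - p‖)).subset ?_
    intro s hs
    refine ⟨hs.1, ?_⟩
    rw [le_div_iff₀ hn]
    have h1 := hR _ (hs.2 q₀ hq₀S hq₀)
    have h2 : ‖s • (q₀ - p)‖ ≤ ‖p + s • (q₀ - p)‖ + ‖p‖ := by
      have := norm_sub_le (p + s • (q₀ - p)) p
      simpa using this
    rw [norm_smul, Real.norm_eq_abs, abs_of_nonneg (by linarith [hs.1])] at h2
    linarith
  have hTc : IsCompact T := Metric.isCompact_of_isClosed_isBounded hTcl hTb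
  obtain ⟨σ, hσT, hσ⟩ := hTc.exists_isGreatest ⟨1, hT1⟩
  have hσ1 : 1 ≤ σ := hσT.1
  set E : Set (ℝ × ℝ) := {x | p + σ • (x - p) ∈ E₀} with hEdef
  have hE : IsHomothet D E := by
    have h := hom_preimage hE₀ (μ := σ) (by linarith) (p - σ • p)
    convert h using 2
    ext x
    rw [show p + σ • (x - p) = σ • x + (p - σ • p) by module]
  obtain ⟨hEc, hEv⟩ := hom_compact_convex hc hv hE
  have hEE : ∀ x ∈ S, x ∈ E ↔ x ∈ E₀ := by
    intro x hx
    refine ⟨fun h => ?_, fun h => hσT.2 x hx h⟩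
    have := hE₀v.add_smul_mem (x := p) (y := σ • (x - p)) hp h (t := σ⁻¹)
      ⟨by positivity, inv_le_one_of_one_le₀ hσ1⟩
    rw [smul_smul, inv_mul_cancel₀ (by linarith), one_smul] at this
    simpa using this
  have hpE : p ∈ E := (hEE p hpS).2 hp
  -- a point that exits
  obtain ⟨r, hrS, hr, hrp, hexit⟩ : ∃ r ∈ S, r ∈ E₀ ∧ r ≠ p ∧
      ∀ s : ℝ, 1 < s → p + s • (r - p) ∉ E := by
    by_contra! hcon
    have hev : ∀ᶠ s : ℝ in 𝓝[>] 1, ∀ r ∈ S, r ∈ E₀ → p + s • (r - p) ∈ E := by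
      rw [eventually_all_finset]
      intro r hrS
      by_cases hr : r ∈ E₀
      swap
      · exact Eventually.of_forall fun _ h => absurd h hr
      by_cases hrp : r = p
      · refine Eventually.of_forall fun _ _ => ?_
        simpa [hrp] using hpE
      obtain ⟨s₀, hs₀, hmem⟩ := hcon r hrS hr hrp
      filter_upwards [Ioo_mem_nhdsGT hs₀] with s hs _
      have := hEv.add_smul_mem (x := p) (y := s₀ • (r - p)) hpE hmem (t := s / s₀)
        ⟨div_nonneg (by linarith [hs.1]) (by linarith), (div_le_one (by linarith)).2 hs.2.le⟩
      rwa [smul_smul, div_mul_cancel₀ _ (by linarith)] at this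
    obtain ⟨s, hs, hs1⟩ := (hev.and self_mem_nhdsWithin).exists
    have hs1 : 1 < s := hs1
    have : σ * s ∈ T := by
      refine ⟨by nlinarith, fun q hqS hq => ?_⟩
      have h := hs q hqS hq
      simp only [hEdef, Set.mem_ofPred_eq, add_sub_cancel_left, smul_smul] at h
      exact h
    have := hσ this
    nlinarith
  refine ⟨r, hrS, hr, hrp, ?_⟩
  have hrE := (hEE r hrS).2 hr
  -- choose δ
  have hδ : ∀ᶠ δ : ℝ in 𝓝[>] 0, ∀ q ∈ S, q ∈ E → q ≠ r →
      midpoint ℝ q r + (δ / 2) • (r - p) ∈ E := by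
    rw [eventually_all_finset]
    intro q hqS
    by_cases hq : q ∈ E ∧ q ≠ r
    swap
    · exact Eventually.of_forall fun _ h1 h2 => absurd ⟨h1, h2⟩ hq
    have hcont : Tendsto (fun δ : ℝ => midpoint ℝ q r + (δ / 2) • (r - p)) (𝓝[>] 0)
        (𝓝 (midpoint ℝ q r)) := by
      have : Continuous (fun δ : ℝ => midpoint ℝ q r + (δ / 2) • (r - p)) := by fun_prop
      have h := this.tendsto 0
      simp only [zero_div, zero_smul, add_zero] at h
      exact h.mono_left nhdsWithin_le_nhds
    have := hcont.eventually
      (mem_interior_iff_mem_nhds.1 (hmid E hE q hqS r hrS hq.1 hrE hq.2))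
    filter_upwards [this] with δ h _ _
    exact h
  obtain ⟨δ, hδ, hδ0⟩ := (hδ.and self_mem_nhdsWithin).exists
  have hδ0 : 0 < δ := hδ0
  set c : ℝ × ℝ := r + δ • (r - p) with hcdef
  have hη : ∀ᶠ η : ℝ in 𝓝[>] 0, ∀ x ∈ S, x ∉ E → x + η • (c - x) ∉ E := by
    rw [eventually_all_finset]
    intro x hxS
    by_cases hx : x ∈ E
    · exact Eventually.of_forall fun _ h => absurd hx h
    have hcont : Tendsto (fun η : ℝ => x + η • (c - x)) (𝓝[>] 0) (𝓝 x) := by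
      have : Continuous (fun η : ℝ => x + η • (c - x)) := by fun_prop
      have h := this.tendsto 0
      simp only [zero_smul, add_zero] at h
      exact h.mono_left nhdsWithin_le_nhds
    filter_upwards [hcont.eventually (hEc.isClosed.isOpen_compl.mem_nhds hx)] with η h _
    exact h
  obtain ⟨η, hη, hηI⟩ := (hη.and (Ioo_mem_nhdsGT (show (0 : ℝ) < 1 / 2 by norm_num))).exists
  obtain ⟨hη0, hη1⟩ := hηI
  refine ⟨{x | (1 - η) • x + η • c ∈ E}, hom_preimage hE (by linarith) _, fun x hxS => ?_⟩
  have he : (1 - η) • x + η • c = x + η • (c - x) := by module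
  rw [Set.mem_ofPred_eq, he, ← hEE x hxS]
  constructor
  · intro h
    refine ⟨by_contra fun hx => hη x hxS hx h, ?_⟩
    rintro rfl
    apply hexit (1 + η * δ) (by nlinarith)
    convert h using 1
    rw [hcdef]; module
  · rintro ⟨hx, hxr⟩
    have h := hδ x hxS hx hxr
    have h2 := hEv.add_smul_mem (x := x) (y := (1 / 2 : ℝ) • (c - x)) hx
      (by
        convert h using 1
        rw [hcdef, midpoint_eq_smul_add]
        simp only [invOf_eq_inv]
        module) (t := 2 * η) ⟨by linarith, by linarith⟩
    rw [smul_smul] at h2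
    convert h2 using 3
    ring

lemma main_conn {D : Set (ℝ × ℝ)} {S : Finset (ℝ × ℝ)} (hc : IsCompact D) (hv : Convex ℝ D)
    (hmid : ∀ E, IsHomothet D E → ∀ q ∈ S, ∀ r ∈ S, q ∈ E → r ∈ E → q ≠ r →
      midpoint ℝ q r ∈ interior E) (k : ℕ) :
    ∀ E, IsHomothet D E → {p : ℝ × ℝ | p ∈ S ∧ p ∈ E}.Nonempty →
      (S.filter (· ∈ E)).card = k →
      ((DelaunayGraph D S).induce {p : ℝ × ℝ | p ∈ S ∧ p ∈ E}).Connected := by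
  induction k using Nat.strong_induction_on with
  | _ k ih =>
  intro E hE hne hk
  obtain ⟨p, hpS, hp⟩ := hne
  by_cases h1 : ∃ q ∈ S, q ∈ E ∧ q ≠ p
  swap
  · push Not at h1
    have : {p : ℝ × ℝ | p ∈ S ∧ p ∈ E} = {p} := by
      ext x
      refine ⟨fun h => h1 x h.1 h.2, ?_⟩
      rintro rfl
      exact ⟨hpS, hp⟩
    rw [this]
    have : Nonempty ({p} : Set (ℝ × ℝ)) := ⟨⟨p, rfl⟩⟩
    have : Subsingleton ({p} : Set (ℝ × ℝ)) := inferInstance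
    exact ⟨fun x y => by rw [Subsingleton.elim x y]⟩
  obtain ⟨q, hqS, hq, hqp⟩ := h1
  obtain ⟨r, hrS, hr, hrp, E₁, hE₁, h₁⟩ := removal hc hv hmid hE hpS hp hqS hq hqp
  obtain ⟨r', hr'S, hr', hr'r, E₂, hE₂, h₂⟩ := removal hc hv hmid hE hrS hr hpS hp hrp.symm
  by_cases h3 : ∃ z ∈ S, z ∈ E ∧ z ≠ r ∧ z ≠ r'
  · obtain ⟨z, hzS, hz, hzr, hzr'⟩ := h3
    have hlt : ∀ (E' : Set (ℝ × ℝ)) (t : ℝ × ℝ), t ∈ S → t ∈ E → (∀ x ∈ S, x ∈ E' ↔ x ∈ E ∧ x ≠ t) →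
        (S.filter (· ∈ E')).card < k := by
      intro E' t htS ht h
      rw [← hk]
      apply Finset.card_lt_card
      rw [Finset.ssubset_iff_of_subset]
      · refine ⟨t, by simp [htS, ht], ?_⟩
        simp [htS, h t htS]
      · intro x hx
        simp only [Finset.mem_filter] at hx ⊢
        exact ⟨hx.1, ((h x hx.1).1 hx.2).1⟩
    have c₁ := ih _ (hlt E₁ r hrS hr h₁) E₁ hE₁ ⟨z, hzS, (h₁ z hzS).2 ⟨hz, hzr⟩⟩ rfl
    have c₂ := ih _ (hlt E₂ r' hr'S hr' h₂) E₂ hE₂ ⟨z, hzS, (h₂ z hzS).2 ⟨hz, hzr'⟩⟩ rfl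
    have := SimpleGraph.induce_union_connected c₁.preconnected c₂.preconnected
      ⟨z, ⟨hzS, (h₁ z hzS).2 ⟨hz, hzr⟩⟩, ⟨hzS, (h₂ z hzS).2 ⟨hz, hzr'⟩⟩⟩
    have hun : {p : ℝ × ℝ | p ∈ S ∧ p ∈ E} =
        {p : ℝ × ℝ | p ∈ S ∧ p ∈ E₁} ∪ {p : ℝ × ℝ | p ∈ S ∧ p ∈ E₂} := by
      ext x
      simp only [Set.mem_ofPred_eq, Set.mem_union]
      constructor
      · rintro ⟨hxS, hx⟩
        by_cases hxr : x = r
        · exact Or.inr ⟨hxS, (h₂ x hxS).2 ⟨hx, by rw [hxr]; exact hr'r.symm⟩⟩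
        · exact Or.inl ⟨hxS, (h₁ x hxS).2 ⟨hx, hxr⟩⟩
      · rintro (⟨hxS, hx⟩ | ⟨hxS, hx⟩)
        · exact ⟨hxS, ((h₁ x hxS).1 hx).1⟩
        · exact ⟨hxS, ((h₂ x hxS).1 hx).1⟩
    rw [hun]
    exact this
  · push Not at h3
    have hset : {p : ℝ × ℝ | p ∈ S ∧ p ∈ E} = {r, r'} := by
      ext x
      simp only [Set.mem_ofPred_eq, Set.mem_insert_iff, Set.mem_singleton_iff]
      constructor
      · rintro ⟨hxS, hx⟩
        by_cases hxr : x = r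
        · exact Or.inl hxr
        · exact Or.inr (h3 x hxS hx hxr)
      · rintro (rfl | rfl)
        · exact ⟨hrS, hr⟩
        · exact ⟨hr'S, hr'⟩
    rw [hset]
    apply SimpleGraph.induce_pair_connected_of_adj
    rw [DelaunayGraph, SimpleGraph.fromRel_adj]
    refine ⟨hr'r.symm, Or.inl ⟨hrS, hr'S, E, hE, fun s hs => ?_⟩⟩
    have := Set.ext_iff.1 hset s
    simp only [Set.mem_ofPred_eq, Set.mem_insert_iff, Set.mem_singleton_iff] at this
    rw [← this]
    simp [hs]

/-- For a convex `n`-gon `D` and a finite point set `S` in general position with respect to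
`D`, the points of `S` inside any homothet `D'` of `D` induce a connected subgraph of the
generalized Delaunay triangulation `DT_D(S)`. -/
theorem stmt_9 (n : ℕ) (hn : 3 ≤ n) (W : Finset (ℝ × ℝ)) (hW : W.card = n)
    (D : Set (ℝ × ℝ)) (hD : D = convexHull ℝ (W : Set (ℝ × ℝ)))
    (S : Finset (ℝ × ℝ)) (hgen : GeneralPosition D W S)
    (D' : Set (ℝ × ℝ)) (hD' : IsHomothet D D')
    (hne : {p : ℝ × ℝ | p ∈ S ∧ p ∈ D'}.Nonempty) :
    ((DelaunayGraph D S).induce {p : ℝ × ℝ | p ∈ S ∧ p ∈ D'}).Connected := by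

  have hc : IsCompact D := hD ▸ W.finite_toSet.isCompact_convexHull ℝ
  have hv : Convex ℝ D := hD ▸ convex_convexHull ℝ _
  refine main_conn hc hv ?_ _ D' hD' hne rfl
  intro E hE q hqS r hrS hq hr hqr
  obtain ⟨μ, hμ, w, rfl⟩ := hom_eq_preimage hE
  have hmid : midpoint ℝ (μ • q + w) (μ • r + w) ∈ interior D := by
    by_contra hcon
    obtain ⟨a, ha, b, hb, hab, hseg, t, ht⟩ := midpoint_interior hD hq hr
      (fun h => hqr (smul_right_injective _ hμ.ne' (add_right_cancel h))) hcon
    refine hgen.1 a ha b hb hab hseg q hqS r hrS hqr ⟨μ⁻¹ * t, ?_⟩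
    rw [mul_smul, ← ht, add_sub_add_right_eq_sub, ← smul_sub, smul_smul,
      inv_mul_cancel₀ hμ.ne', one_smul]
  have hopen : IsOpen {x : ℝ × ℝ | μ • x + w ∈ interior D} :=
    isOpen_interior.preimage (f := fun x : ℝ × ℝ => μ • x + w) (by fun_prop)
  have hsub : {x : ℝ × ℝ | μ • x + w ∈ interior D} ⊆ {x : ℝ × ℝ | μ • x + w ∈ D} :=
    fun x hx => interior_subset (s := D) hx
  apply interior_maximal hsub hopen
  rw [Set.mem_ofPred_eq]
  convert hmid using 1
  simp only [midpoint_eq_smul_add, invOf_eq_inv]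
  module
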